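/- Assume k : ℝ^d × ℝ^d → ℝ is a symmetric kernel such that every Gram matrix (k(xⁱ,xʲ))_{i,j=1}^N is positive semidefinite and k together with all its partial derivatives up to order 2 is bounded in absolute value by B ∈ (0,∞). Assume V : ℝ^d → ℝ is twice continuously differentiable with ‖∇²V(x)‖_op ≤ C_V for all x, V(x) > 0 for all x, and ‖∇V(x)‖ ≤ A·V(x)^α for all x, where A > 0 and α ∈ [0,1/2]. Let ν ∈ (0,1], h > 0 with h ≤ ν/B, and set η = B·h/ν ≤ 1. For a configuration x̲ = (x¹,…,x^N) ∈ (ℝ^d)^N, write f(x̲) = (1/N)Σ_{i=1}^N V(xⁱ) and let x̲′ = x̲ − h·𝖳_ν(x̲) be the one-step R-SVGD update. Then f(x̲′) ≤ (1 + C_V·A²·η²)·f(x̲) + A·√d·η·f(x̲)^α + C_V·(A² + d)·η². -/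

import Mathlib

noncomputable section

/-- Basis directions of `ℝ^d × ℝ^d`, used to express the partial derivatives of a kernel
`k : ℝ^d × ℝ^d → ℝ` with respect to each coordinate of each of its two arguments. -/
def pairBasis (d : ℕ) :
    (Fin d ⊕ Fin d) → EuclideanSpace ℝ (Fin d) × EuclideanSpace ℝ (Fin d) :=
  Sum.elim (fun i => (EuclideanSpace.single i 1, 0)) (fun i => (0, EuclideanSpace.single i 1))

/-- The R-SVGD vector field `𝖳_ν(x̲)`: its `i`-th block is
`Σ_l (((1−ν)K/N + ν I_N)⁻¹)_{i,l} · (1/N) Σ_j (k(x^l,x^j) ∇V(x^j) − ∇₂k(x^l,x^j))`,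
where `K = (k(x^a,x^b))_{a,b}` is the Gram matrix. -/
def steinField (d N : ℕ) (k : EuclideanSpace ℝ (Fin d) → EuclideanSpace ℝ (Fin d) → ℝ)
    (V : EuclideanSpace ℝ (Fin d) → ℝ) (ν : ℝ)
    (x : Fin N → EuclideanSpace ℝ (Fin d)) : Fin N → EuclideanSpace ℝ (Fin d) :=
  fun i => ∑ l : Fin N,
    ((((1 - ν) / (N : ℝ)) • Matrix.of (fun a b : Fin N => k (x a) (x b)) +
        ν • (1 : Matrix (Fin N) (Fin N) ℝ))⁻¹ i l) •
      ((N : ℝ)⁻¹ •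
        ∑ j : Fin N, (k (x l) (x j) • gradient V (x j) - gradient (k (x l)) (x j)))

lemma aux_quad {N : ℕ} (P : Matrix (Fin N) (Fin N) ℝ) (hP : P.PosSemidef) (a ν : ℝ)
    (ha : 0 ≤ a) (hν : 0 < ν) :
    (∀ g : Fin N → ℝ, 0 ≤ g ⬝ᵥ ((a • P + ν • (1 : Matrix (Fin N) (Fin N) ℝ))⁻¹.mulVec (P.mulVec g))) ∧
    (∀ g : Fin N → ℝ, ν ^ 2 * ∑ i, ((a • P + ν • (1 : Matrix (Fin N) (Fin N) ℝ))⁻¹.mulVec g i) ^ 2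
      ≤ ∑ i, g i ^ 2) := by
  set M := a • P + ν • (1 : Matrix (Fin N) (Fin N) ℝ) with hM
  have hpd : M.PosDef := Matrix.PosDef.posSemidef_add (hP.smul ha) (Matrix.PosDef.one.smul hν)
  have hdet : IsUnit M.det := hpd.det_pos.ne'.isUnit
  have hPt : P.transpose = P := by simpa using hP.isHermitian.eq
  have hMt : M.transpose = M := by simp [hM, hPt]
  have hMy : ∀ g : Fin N → ℝ, M.mulVec (M⁻¹.mulVec g) = g := by
    intro g
    rw [Matrix.mulVec_mulVec, Matrix.mul_nonsing_inv _ hdet, Matrix.one_mulVec]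
  have hexp : ∀ y : Fin N → ℝ, M.mulVec y = a • P.mulVec y + ν • y := by
    intro y
    simp [hM, Matrix.add_mulVec, Matrix.smul_mulVec]
  have hq : ∀ y : Fin N → ℝ, 0 ≤ y ⬝ᵥ P.mulVec y := by
    intro y
    simpa using hP.dotProduct_mulVec_nonneg y
  constructor
  · intro g
    have hsym : g ⬝ᵥ (M⁻¹.mulVec (P.mulVec g)) = (M⁻¹.mulVec g) ⬝ᵥ (P.mulVec g) := by
      rw [Matrix.dotProduct_mulVec, ← Matrix.mulVec_transpose, Matrix.transpose_nonsing_inv, hMt]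
    rw [hsym]
    set y := M⁻¹.mulVec g with hy
    have hg : g = a • P.mulVec y + ν • y := by rw [← hexp, hMy]
    have h1 : y ⬝ᵥ P.mulVec g = P.mulVec y ⬝ᵥ g := by
      rw [Matrix.dotProduct_mulVec, ← Matrix.mulVec_transpose, hPt]
    rw [h1, hg, dotProduct_add, dotProduct_smul, dotProduct_smul, dotProduct_comm _ y]
    have h2 : 0 ≤ P.mulVec y ⬝ᵥ P.mulVec y := by
      simp only [dotProduct]
      exact Finset.sum_nonneg fun i _ => mul_self_nonneg _
    have h3 := hq y
    simp only [smul_eq_mul]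
    positivity
  · intro g
    set y := M⁻¹.mulVec g with hy
    have hg : g = a • P.mulVec y + ν • y := by rw [← hexp, hMy]
    have h3 := hq y
    have h4 : ∑ i, g i ^ 2 = a ^ 2 * ∑ i, (P.mulVec y i) ^ 2 + 2 * a * ν * (y ⬝ᵥ P.mulVec y)
        + ν ^ 2 * ∑ i, y i ^ 2 := by
      simp only [dotProduct, Finset.mul_sum, ← Finset.sum_add_distrib]
      refine Finset.sum_congr rfl fun i _ => ?_
      conv_lhs => rw [hg]
      simp only [Pi.add_apply, Pi.smul_apply, smul_eq_mul]
      ring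
    rw [h4]
    have : 0 ≤ ∑ i, (P.mulVec y i) ^ 2 := Finset.sum_nonneg fun i _ => sq_nonneg _
    have h5 : 0 ≤ a ^ 2 * ∑ i, (P.mulVec y i) ^ 2 := by positivity
    have h6 : 0 ≤ 2 * a * ν * (y ⬝ᵥ P.mulVec y) := by positivity
    linarith

lemma aux_quad_vec {d N : ℕ} (P : Matrix (Fin N) (Fin N) ℝ) (hP : P.PosSemidef) (a ν : ℝ)
    (ha : 0 ≤ a) (hν : 0 < ν) (W : Matrix (Fin N) (Fin N) ℝ)
    (hW : W = (a • P + ν • (1 : Matrix (Fin N) (Fin N) ℝ))⁻¹)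
    (g : Fin N → EuclideanSpace ℝ (Fin d)) :
    0 ≤ ∑ i, inner ℝ (g i) (∑ l, W i l • ∑ j, P l j • g j) ∧
    ν ^ 2 * ∑ i, ‖∑ l, W i l • g l‖ ^ 2 ≤ ∑ i, ‖g i‖ ^ 2 := by
  obtain ⟨h1, h2⟩ := aux_quad P hP a ν ha hν
  rw [← hW] at h1 h2
  constructor
  · have : ∑ i, inner ℝ (g i) (∑ l, W i l • ∑ j, P l j • g j)
        = ∑ c : Fin d, (fun i => g i c) ⬝ᵥ (W.mulVec (P.mulVec (fun i => g i c))) := by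
      simp only [dotProduct, Matrix.mulVec]
      rw [Finset.sum_comm]
      refine Finset.sum_congr rfl fun i _ => ?_
      rw [PiLp.inner_apply]
      refine Finset.sum_congr rfl fun c _ => ?_
      simp [mul_comm]
    rw [this]
    exact Finset.sum_nonneg fun c _ => h1 _
  · simp only [EuclideanSpace.norm_sq_eq]
    rw [Finset.sum_comm, Finset.sum_comm (f := fun i c => ‖g i c‖ ^ 2), Finset.mul_sum]
    refine Finset.sum_le_sum fun c _ => ?_
    have := h2 (fun i => g i c)
    simpa [Matrix.mulVec, dotProduct] using this

lemma aux_descent {d : ℕ} (V : EuclideanSpace ℝ (Fin d) → ℝ) (C : ℝ)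
    (hVC2 : ContDiff ℝ 2 V) (hHess : ∀ z, ‖fderiv ℝ (fun y => gradient V y) z‖ ≤ C)
    (x v : EuclideanSpace ℝ (Fin d)) :
    V (x + v) ≤ V x + inner ℝ (gradient V x) v + C / 2 * ‖v‖ ^ 2 := by
  have hVd : Differentiable ℝ V := hVC2.differentiable (by norm_num)
  have hgd : Differentiable ℝ (fun y => gradient V y) := by
    unfold gradient
    have : Differentiable ℝ (fderiv ℝ V) :=
      (hVC2.fderiv_right (m := 1) (by norm_num)).differentiable (by norm_num)
    exact (InnerProductSpace.toDual ℝ _).symm.differentiable.comp this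
  have hlip : ∀ y z, ‖gradient V y - gradient V z‖ ≤ C * ‖y - z‖ := by
    intro y z
    exact Convex.norm_image_sub_le_of_norm_fderiv_le (s := Set.univ) (f := fun y => gradient V y)
      (fun w _ => hgd w) (fun w _ => hHess w) convex_univ (Set.mem_univ _) (Set.mem_univ _)
  let φ : ℝ → ℝ := fun t => V (x + t • v) - t * inner ℝ (gradient V x) v - C / 2 * t ^ 2 * ‖v‖ ^ 2
  have hφ : ∀ t, HasDerivAt φ (inner ℝ (gradient V (x + t • v)) v - inner ℝ (gradient V x) v
      - C * t * ‖v‖ ^ 2) t := by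
    intro t
    have e1 : HasDerivAt (fun t : ℝ => x + t • v) v t := by
      simpa using ((hasDerivAt_id t).smul_const v).const_add x
    have e2 : HasDerivAt (fun t : ℝ => V (x + t • v)) (inner ℝ (gradient V (x + t • v)) v) t := by
      have := (hVd (x + t • v)).hasGradientAt.hasFDerivAt.comp_hasDerivAt t e1
      rw [InnerProductSpace.toDual_apply_apply] at this
      exact this
    have e3 : HasDerivAt (fun t : ℝ => t * inner ℝ (gradient V x) v) (inner ℝ (gradient V x) v) t := by
      simpa using (hasDerivAt_id t).mul_const (inner ℝ (gradient V x) v)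
    have e4 : HasDerivAt (fun t : ℝ => C / 2 * t ^ 2 * ‖v‖ ^ 2) (C * t * ‖v‖ ^ 2) t := by
      have := ((hasDerivAt_pow 2 t).const_mul (C / 2)).mul_const (‖v‖ ^ 2)
      refine this.congr_deriv ?_
      simp only [Nat.add_one_sub_one, pow_one, Nat.cast_ofNat]
      ring
    exact (e2.sub e3).sub e4
  have hanti : AntitoneOn φ (Set.Icc 0 1) := by
    refine antitoneOn_of_deriv_nonpos (convex_Icc 0 1)
      (fun t _ => (hφ t).continuousAt.continuousWithinAt)
      (fun t _ => (hφ t).differentiableAt.differentiableWithinAt) ?_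
    intro t ht
    rw [interior_Icc] at ht
    rw [(hφ t).deriv, ← inner_sub_left]
    have a1 := real_inner_le_norm (gradient V (x + t • v) - gradient V x) v
    have a2 := hlip (x + t • v) x
    rw [add_sub_cancel_left, norm_smul, Real.norm_of_nonneg ht.1.le] at a2
    have a3 := mul_le_mul_of_nonneg_right a2 (norm_nonneg v)
    nlinarith
  have := hanti (Set.left_mem_Icc.2 zero_le_one) (Set.right_mem_Icc.2 zero_le_one) zero_le_one
  simp only [φ, one_smul, zero_smul, add_zero, one_mul, zero_mul] at this
  linarith

lemma aux_gradk {d : ℕ} (k : EuclideanSpace ℝ (Fin d) → EuclideanSpace ℝ (Fin d) → ℝ) (B : ℝ)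
    (hB : 0 < B)
    (hkC2 : ContDiff ℝ 2 (fun p : EuclideanSpace ℝ (Fin d) × EuclideanSpace ℝ (Fin d) =>
      k p.1 p.2))
    (hk1 : ∀ (p : EuclideanSpace ℝ (Fin d) × EuclideanSpace ℝ (Fin d)) (v : Fin d ⊕ Fin d),
      |fderiv ℝ (fun q : EuclideanSpace ℝ (Fin d) × EuclideanSpace ℝ (Fin d) => k q.1 q.2) p
        (pairBasis d v)| ≤ B) (x y : EuclideanSpace ℝ (Fin d)) :
    ‖gradient (k x) y‖ ≤ B * √d := by
  have hd := (hkC2.differentiable (by norm_num)) (x, y)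
  have e1 : HasFDerivAt (fun z => (x, z)) (ContinuousLinearMap.inr ℝ (EuclideanSpace ℝ (Fin d)) (EuclideanSpace ℝ (Fin d))) y :=
    hasFDerivAt_prodMk_right x y
  have e2 := HasFDerivAt.comp y (f := fun z => (x, z)) hd.hasFDerivAt e1
  have e3 : fderiv ℝ (k x) y = _ := e2.fderiv
  have hc : ∀ i, |gradient (k x) y i| ≤ B := by
    intro i
    have h1 : gradient (k x) y i = inner ℝ (gradient (k x) y) (EuclideanSpace.single i (1:ℝ)) := by
      rw [EuclideanSpace.inner_single_right]; simp
    have h2 : inner ℝ (gradient (k x) y) (EuclideanSpace.single i (1:ℝ))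
        = fderiv ℝ (k x) y (EuclideanSpace.single i (1:ℝ)) := by
      unfold gradient
      exact InnerProductSpace.toDual_symm_apply
    rw [h1, h2, e3]
    simpa [pairBasis] using hk1 (x, y) (Sum.inr i)
  rw [EuclideanSpace.norm_eq]
  have : ∑ i, ‖gradient (k x) y i‖ ^ 2 ≤ B ^ 2 * d := by
    calc _ ≤ ∑ i : Fin d, B ^ 2 := Finset.sum_le_sum fun i _ => by
          rw [Real.norm_eq_abs]; exact pow_le_pow_left₀ (abs_nonneg _) (hc i) 2
      _ = _ := by simp [mul_comm]
  calc _ ≤ √(B ^ 2 * d) := Real.sqrt_le_sqrt this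
    _ = _ := by rw [Real.sqrt_mul (sq_nonneg B), Real.sqrt_sq hB.le]

lemma aux_jensen {N : ℕ} (hN : 0 < N) (v : Fin N → ℝ) (hv : ∀ i, 0 < v i) (α : ℝ)
    (hα : α ∈ Set.Icc (0 : ℝ) (1 / 2)) :
    (N : ℝ)⁻¹ * ∑ i, (v i ^ α) ^ 2 ≤ (((N : ℝ)⁻¹ * ∑ i, v i) ^ α) ^ 2 := by
  have hN' : (0:ℝ) < N := by exact_mod_cast hN
  have hc := Real.concaveOn_rpow (p := 2 * α) (by linarith [hα.1]) (by linarith [hα.2])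
  have := hc.le_map_sum (t := Finset.univ) (w := fun _ : Fin N => (N : ℝ)⁻¹) (p := v)
    (fun _ _ => by positivity) (by simp [hN'.ne']) (fun i _ => (hv i).le)
  simp only [smul_eq_mul, ← Finset.mul_sum] at this
  have key : ∀ t : ℝ, 0 ≤ t → (t ^ α) ^ 2 = t ^ (2 * α) := by
    intro t ht
    rw [← Real.rpow_natCast, ← Real.rpow_mul ht, mul_comm]; norm_num
  rw [key _ (mul_nonneg (by positivity) (Finset.sum_nonneg fun i _ => (hv i).le))]
  simp only [key _ (hv _).le]
  exact this

lemma aux_pow {t α : ℝ} (ht : 0 < t) (hα : α ∈ Set.Icc (0 : ℝ) (1 / 2)) :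
    (t ^ α) ^ 2 ≤ 1 + t := by
  rw [← Real.rpow_natCast, ← Real.rpow_mul ht.le]
  rcases le_total t 1 with h | h
  · have := Real.rpow_le_one ht.le h (z := α * (2:ℕ)) (by have := hα.1; positivity)
    linarith
  · have := Real.rpow_le_rpow_of_exponent_le h (y := α * (2:ℕ)) (z := 1) (by push_cast; linarith [hα.2])
    rw [Real.rpow_one] at this
    linarith

/-- One-step recursion for the averaged potential along R-SVGD: with
`η = B·h/ν ≤ 1`, `f(x̲) = (1/N)Σᵢ V(xⁱ)` and `x̲′ = x̲ − h·𝖳_ν(x̲)`,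
`f(x̲′) ≤ (1 + C_V·A²·η²)·f(x̲) + A·√d·η·f(x̲)^α + C_V·(A² + d)·η²`. -/
theorem statement_13 {d N : ℕ}
    (k : EuclideanSpace ℝ (Fin d) → EuclideanSpace ℝ (Fin d) → ℝ)
    (V : EuclideanSpace ℝ (Fin d) → ℝ) (B A α ν C_V h : ℝ)
    (hB : 0 < B)
    (hksymm : ∀ x y, k x y = k y x)
    (hgram : ∀ (m : ℕ) (y : Fin m → EuclideanSpace ℝ (Fin d)),
      (Matrix.of fun a b : Fin m => k (y a) (y b)).PosSemidef)
    (hkC2 : ContDiff ℝ 2 (fun p : EuclideanSpace ℝ (Fin d) × EuclideanSpace ℝ (Fin d) =>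
      k p.1 p.2))
    (hk0 : ∀ x y, |k x y| ≤ B)
    (hk1 : ∀ (p : EuclideanSpace ℝ (Fin d) × EuclideanSpace ℝ (Fin d)) (v : Fin d ⊕ Fin d),
      |fderiv ℝ (fun q : EuclideanSpace ℝ (Fin d) × EuclideanSpace ℝ (Fin d) => k q.1 q.2) p
        (pairBasis d v)| ≤ B)
    (hk2 : ∀ (p : EuclideanSpace ℝ (Fin d) × EuclideanSpace ℝ (Fin d)) (v w : Fin d ⊕ Fin d),
      |fderiv ℝ (fun q : EuclideanSpace ℝ (Fin d) × EuclideanSpace ℝ (Fin d) =>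
          fderiv ℝ (fun r : EuclideanSpace ℝ (Fin d) × EuclideanSpace ℝ (Fin d) => k r.1 r.2) q
            (pairBasis d v)) p (pairBasis d w)| ≤ B)
    (hVC2 : ContDiff ℝ 2 V)
    (hHess : ∀ z, ‖fderiv ℝ (fun y => gradient V y) z‖ ≤ C_V)
    (hVpos : ∀ x, 0 < V x)
    (hA : 0 < A) (hα : α ∈ Set.Icc (0 : ℝ) (1 / 2))
    (hVgrad : ∀ x, ‖gradient V x‖ ≤ A * V x ^ α)
    (hν : ν ∈ Set.Ioc (0 : ℝ) 1)
    (hh : 0 < h) (hhν : h ≤ ν / B)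
    (x : Fin N → EuclideanSpace ℝ (Fin d)) :
    (N : ℝ)⁻¹ * ∑ i : Fin N, V (x i - h • steinField d N k V ν x i) ≤
      (1 + C_V * A ^ 2 * (B * h / ν) ^ 2) * ((N : ℝ)⁻¹ * ∑ i : Fin N, V (x i)) +
        A * Real.sqrt d * (B * h / ν) * ((N : ℝ)⁻¹ * ∑ i : Fin N, V (x i)) ^ α +
        C_V * (A ^ 2 + d) * (B * h / ν) ^ 2 := by
  have hν0 := hν.1
  have hC : 0 ≤ C_V := (norm_nonneg _).trans (hHess 0)
  rcases Nat.eq_zero_or_pos N with hN | hN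
  · subst hN
    simp only [CharP.cast_eq_zero, inv_zero, zero_mul, mul_zero, zero_add]
    have := Real.rpow_nonneg (le_refl (0:ℝ)) α
    positivity
  have hN' : (0:ℝ) < N := by exact_mod_cast hN
  set K : Matrix (Fin N) (Fin N) ℝ := Matrix.of (fun a b : Fin N => k (x a) (x b)) with hK
  have hKp : K.PosSemidef := hgram N x
  set a : ℝ := (1 - ν) / (N : ℝ) with ha
  have ha0 : 0 ≤ a := div_nonneg (by linarith [hν.2]) hN'.le
  set W : Matrix (Fin N) (Fin N) ℝ := (a • K + ν • (1 : Matrix (Fin N) (Fin N) ℝ))⁻¹ with hW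
  set G : Fin N → EuclideanSpace ℝ (Fin d) := fun i => gradient V (x i) with hG
  set u : Fin N → EuclideanSpace ℝ (Fin d) :=
    fun l => (N : ℝ)⁻¹ • ∑ j, gradient (k (x l)) (x j) with hu
  set r : Fin N → EuclideanSpace ℝ (Fin d) := fun l => (N : ℝ)⁻¹ •
    ∑ j : Fin N, (k (x l) (x j) • gradient V (x j) - gradient (k (x l)) (x j)) with hr
  set T : Fin N → EuclideanSpace ℝ (Fin d) := fun i => steinField d N k V ν x i with hT
  have hTr : ∀ i, T i = ∑ l, W i l • r l := fun i => rfl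
  set w : Fin N → EuclideanSpace ℝ (Fin d) := fun i => ∑ l, W i l • u l with hw
  have hTs : ∀ i, T i = (N : ℝ)⁻¹ • (∑ l, W i l • ∑ j, K l j • G j) - w i := by
    intro i
    rw [hTr, hw, Finset.smul_sum, ← Finset.sum_sub_distrib]
    refine Finset.sum_congr rfl fun l _ => ?_
    simp only [hr, hu, hG, hK, Matrix.of_apply, Finset.sum_sub_distrib, smul_sub]
    rw [smul_comm (W i l) ((N:ℝ)⁻¹)]
  set f : ℝ := (N : ℝ)⁻¹ * ∑ i : Fin N, V (x i) with hf
  have hf0 : 0 ≤ f := mul_nonneg (by positivity) (Finset.sum_nonneg fun i _ => (hVpos _).le)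
  have hfα : 0 ≤ f ^ α := Real.rpow_nonneg hf0 α
  have hGi : ∀ i, ‖G i‖ ^ 2 ≤ A ^ 2 * (V (x i) ^ α) ^ 2 := by
    intro i
    rw [← mul_pow]
    exact pow_le_pow_left₀ (norm_nonneg _) (hVgrad (x i)) 2
  have hsum : ∑ i, ‖G i‖ ^ 2 ≤ A ^ 2 * ∑ i, (V (x i) ^ α) ^ 2 := by
    rw [Finset.mul_sum]; exact Finset.sum_le_sum fun i _ => hGi i
  have hJ := aux_jensen hN (fun i => V (x i)) (fun i => hVpos _) α hα
  rw [← hf] at hJ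
  have hJ' : ∑ i, (V (x i) ^ α) ^ 2 ≤ N * (f ^ α) ^ 2 := by
    rwa [inv_mul_le_iff₀ hN'] at hJ
  have hG1 : ∑ i, ‖G i‖ ^ 2 ≤ A ^ 2 * (N * (f ^ α) ^ 2) :=
    hsum.trans (mul_le_mul_of_nonneg_left hJ' (sq_nonneg A))
  have hG2 : ∑ i, ‖G i‖ ^ 2 ≤ A ^ 2 * (N * (1 + f)) := by
    refine hsum.trans (mul_le_mul_of_nonneg_left ?_ (sq_nonneg A))
    calc _ ≤ ∑ i, (1 + V (x i)) := Finset.sum_le_sum fun i _ => aux_pow (hVpos _) hα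
      _ = N * (1 + f) := by
        rw [Finset.sum_add_distrib, hf]; simp; field_simp
  have hgk := aux_gradk k B hB hkC2 hk1
  have hdsq : √(d:ℝ) ^ 2 = d := Real.sq_sqrt (Nat.cast_nonneg d)
  have hun : ∀ l, ‖u l‖ ≤ B * √d := by
    intro l
    simp only [hu]
    rw [norm_smul, norm_inv, Real.norm_of_nonneg hN'.le, inv_mul_le_iff₀ hN']
    calc _ ≤ ∑ j : Fin N, B * √d := norm_sum_le_of_le _ fun j _ => hgk _ _
      _ = _ := by simp
  have hus : ∑ l, ‖u l‖ ^ 2 ≤ N * (B ^ 2 * d) := by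
    calc _ ≤ ∑ l : Fin N, (B * √d) ^ 2 :=
          Finset.sum_le_sum fun l _ => pow_le_pow_left₀ (norm_nonneg _) (hun l) 2
      _ = _ := by simp [mul_pow, hdsq]
  have hrs : ∑ l, ‖r l‖ ^ 2 ≤ N * (2 * B ^ 2 * (A ^ 2 * (1 + f) + d)) := by
    have h1 : ∀ l, ‖r l‖ ^ 2 ≤ 2 * B ^ 2 * (A ^ 2 * (1 + f) + d) := by
      intro l
      have e1 : ‖r l‖ ≤ (N:ℝ)⁻¹ * ∑ j, B * (‖G j‖ + √d) := by
        simp only [hr]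
        rw [norm_smul, norm_inv, Real.norm_of_nonneg hN'.le]
        refine mul_le_mul_of_nonneg_left (norm_sum_le_of_le _ fun j _ => ?_) (by positivity)
        refine (norm_sub_le _ _).trans ?_
        rw [norm_smul, Real.norm_eq_abs, mul_add]
        exact add_le_add (mul_le_mul_of_nonneg_right (hk0 _ _) (norm_nonneg _)) (hgk _ _)
      have e2 : (∑ j, B * (‖G j‖ + √d)) ^ 2 ≤ N * ∑ j, (B * (‖G j‖ + √d)) ^ 2 := by
        have := sq_sum_le_card_mul_sum_sq (s := (Finset.univ : Finset (Fin N)))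
          (f := fun j => B * (‖G j‖ + √d))
        simpa using this
      have e3 : ∑ j, (B * (‖G j‖ + √d)) ^ 2 ≤ N * (2 * B ^ 2 * (A ^ 2 * (1 + f) + d)) := by
        calc _ ≤ ∑ j, (2 * B ^ 2 * ‖G j‖ ^ 2 + 2 * B ^ 2 * d) := by
              refine Finset.sum_le_sum fun j _ => ?_
              have := mul_nonneg (sq_nonneg B) (sq_nonneg (‖G j‖ - √d))
              have h2 : B ^ 2 * √(d:ℝ) ^ 2 = B ^ 2 * d := by rw [hdsq]
              nlinarith
          _ = 2 * B ^ 2 * ∑ j, ‖G j‖ ^ 2 + N * (2 * B ^ 2 * d) := by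
              rw [Finset.sum_add_distrib, ← Finset.mul_sum]; simp
          _ ≤ 2 * B ^ 2 * (A ^ 2 * (N * (1 + f))) + N * (2 * B ^ 2 * d) := by
              gcongr
          _ = _ := by ring
      calc ‖r l‖ ^ 2 ≤ ((N:ℝ)⁻¹ * ∑ j, B * (‖G j‖ + √d)) ^ 2 :=
            pow_le_pow_left₀ (norm_nonneg _) e1 2
        _ = (N:ℝ)⁻¹ ^ 2 * (∑ j, B * (‖G j‖ + √d)) ^ 2 := by ring
        _ ≤ (N:ℝ)⁻¹ ^ 2 * (N * (N * (2 * B ^ 2 * (A ^ 2 * (1 + f) + d)))) := by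
            refine mul_le_mul_of_nonneg_left (e2.trans ?_) (by positivity)
            exact mul_le_mul_of_nonneg_left e3 hN'.le
        _ = _ := by field_simp
    calc _ ≤ ∑ l : Fin N, 2 * B ^ 2 * (A ^ 2 * (1 + f) + d) := Finset.sum_le_sum fun l _ => h1 l
      _ = _ := by simp
  have hpos := (aux_quad_vec K hKp a ν ha0 hν0 W hW G).1
  have hw2 := (aux_quad_vec K hKp a ν ha0 hν0 W hW u).2
  have hT2 := (aux_quad_vec K hKp a ν ha0 hν0 W hW r).2
  have hTsum : ∑ i, ‖T i‖ ^ 2 ≤ N * (2 * B ^ 2 * (A ^ 2 * (1 + f) + d)) / ν ^ 2 := by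
    rw [le_div_iff₀ (by positivity), mul_comm]
    simp only [hTr]
    exact hT2.trans hrs
  have hwsum : ∑ i, ‖w i‖ ^ 2 ≤ N * (B ^ 2 * d) / ν ^ 2 := by
    rw [le_div_iff₀ (by positivity), mul_comm]
    exact hw2.trans hus
  have hcross : ∑ i, inner ℝ (G i) (w i) ≤ N * (A * √d * (B / ν) * f ^ α) := by
    have c1 : ∑ i, inner ℝ (G i) (w i) ≤ ∑ i, ‖G i‖ * ‖w i‖ :=
      Finset.sum_le_sum fun i _ => real_inner_le_norm _ _
    refine c1.trans (abs_le_of_sq_le_sq' ?_ (by positivity)).2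
    refine (Finset.sum_mul_sq_le_sq_mul_sq _ _ _).trans ?_
    calc _ ≤ (A ^ 2 * (N * (f ^ α) ^ 2)) * (N * (B ^ 2 * d) / ν ^ 2) :=
          mul_le_mul hG1 hwsum (Finset.sum_nonneg fun i _ => sq_nonneg _) (by positivity)
      _ = _ := by
          field_simp; rw [hdsq]
  have hinner : -(N * (A * √d * (B / ν) * f ^ α)) ≤ ∑ i, inner ℝ (G i) (T i) := by
    have : ∑ i, inner ℝ (G i) (T i) = (N:ℝ)⁻¹ * ∑ i, inner ℝ (G i) (∑ l, W i l • ∑ j, K l j • G j)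
        - ∑ i, inner ℝ (G i) (w i) := by
      rw [Finset.mul_sum, ← Finset.sum_sub_distrib]
      refine Finset.sum_congr rfl fun i _ => ?_
      rw [hTs, inner_sub_right, real_inner_smul_right]
    rw [this]
    have := mul_nonneg (inv_nonneg.2 hN'.le) hpos
    linarith
  have hdes : ∑ i, V (x i - h • T i) ≤ ∑ i, V (x i) - h * ∑ i, inner ℝ (G i) (T i)
      + C_V / 2 * h ^ 2 * ∑ i, ‖T i‖ ^ 2 := by
    rw [Finset.mul_sum, Finset.mul_sum, ← Finset.sum_sub_distrib, ← Finset.sum_add_distrib]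
    refine Finset.sum_le_sum fun i _ => ?_
    have := aux_descent V C_V hVC2 hHess (x i) (-(h • T i))
    rw [← sub_eq_add_neg, inner_neg_right, real_inner_smul_right, norm_neg, norm_smul, mul_pow,
      Real.norm_eq_abs, sq_abs] at this
    simp only [hG]
    linarith
  have hVs : ∑ i, V (x i) = N * f := by rw [hf]; field_simp
  rw [inv_mul_le_iff₀ hN']
  calc _ ≤ _ := hdes
    _ ≤ N * f + h * (N * (A * √d * (B / ν) * f ^ α))
        + C_V / 2 * h ^ 2 * (N * (2 * B ^ 2 * (A ^ 2 * (1 + f) + d)) / ν ^ 2) := by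
        rw [hVs]
        have b1 := mul_le_mul_of_nonneg_left hinner hh.le
        have b2 := mul_le_mul_of_nonneg_left hTsum (show 0 ≤ C_V / 2 * h ^ 2 by positivity)
        linarith
    _ = _ := by
        field_simp
        ring

end
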